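/- arXiv:2109.01795 — 2 statements merged into one kernel-verified Lean document; each statement's English description precedes it below -/
import Mathlib

section
/- For any finite discounted stochastic game, the map f on strategy profiles has at least one fixed point; consequently, every finite discounted stochastic game possesses a Markov perfect equilibrium. -/
/-!
*Equilibrium.* Since `γ < 1`, a function `w ≤ γ P^π w` is nonpositive. Hence `1 - γ P^π` is
invertible, values depend continuously on the profile, and sub- and supersolutions of the Bellman
equation bound the value. In particular, playing `a` at every visit of `s` raises the value at `s`
iff playing it once does. As `V s` is the average of these one-shot values over `π s`, some action
in the support of `π s` brings no gain; but `f π = π` forces `D a = π a * ∑ D`, so `D = 0`. No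
one-shot deviation is then profitable, and comparison rules out all others.

*Fixed point.* The profiles form a product of simplices, which is a retract of a single simplex, so
it suffices to prove Brouwer's theorem for the simplex. This is done with Scarf's dominant sets
rather than with triangulations. For a family of rankings of a finite set, a dominant set with one
element fewer than there are rankings has exactly two dominant extensions, except for one set of
slacks, which has a single one; if no dominant set carried all colours, each maximal almost rainbow
one would contain exactly two smaller ones, and double counting would equate an odd and an even
number. For the coordinate rankings of a fine net of the simplex, a rainbow dominant set has small
diameter, because the coordinatewise minima of its points must nearly sum to one. Letting the mesh
tend to zero gives the covering theorem of Knaster, Kuratowski and Mazurkiewicz, and Brouwer's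
theorem is its application to the closed sets `{x | x i ≤ F x i}`.
-/

open Finset

structure SG (n S : ℕ) (A : Fin n → ℕ) where
  P : Fin S → (∀ i, Fin (A i)) → Fin S → ℝ
  r : Fin n → Fin S → (∀ i, Fin (A i)) → ℝ
  Rmax : ℝ
  γ : ℝ
  P_nonneg : ∀ s a s', 0 ≤ P s a s'
  P_sum_one : ∀ s a, ∑ s', P s a s' = 1
  r_nonneg : ∀ i s a, 0 ≤ r i s a
  r_le_Rmax : ∀ i s a, r i s a ≤ Rmax
  γ_nonneg : 0 ≤ γ
  γ_lt_one : γ < 1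

namespace SG

variable {n S : ℕ} {A : Fin n → ℕ}

/-- A (behavioral) strategy profile: agent `i` plays at state `s` the distribution
`π i s` on its actions. -/
abbrev Profile (n S : ℕ) (A : Fin n → ℕ) := ∀ i : Fin n, Fin S → Fin (A i) → ℝ

/-- `π` is a genuine strategy profile: each `π i s` is a probability distribution. -/
def IsProfile (π : Profile n S A) : Prop :=
  (∀ i s a, 0 ≤ π i s a) ∧ ∀ i s, ∑ a, π i s a = 1

/-- `A_max`, the largest number of actions of any agent. -/
def Amax (A : Fin n → ℕ) : ℕ := Finset.univ.sup A

/-- Probability of the joint action `a` at state `s` under profile `π`. -/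
def jointProb (π : Profile n S A) (s : Fin S) (a : ∀ i, Fin (A i)) : ℝ :=
  ∏ i, π i s (a i)

/-- The state-transition matrix `P^π` induced by the profile `π`. -/
noncomputable def Pmat (g : SG n S A) (π : Profile n S A) : Matrix (Fin S) (Fin S) ℝ :=
  fun s s' => ∑ a, jointProb π s a * g.P s a s'

/-- Expected one-step reward `r^{i,π}(s)` of agent `i` at state `s` under `π`. -/
noncomputable def rvec (g : SG n S A) (π : Profile n S A) (i : Fin n) (s : Fin S) : ℝ :=
  ∑ a, jointProb π s a * g.r i s a

/-- The value function `V^{π^i,π^{-i}}` of agent `i` under profile `π`: the unique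
solution of the Bellman equation `V = r^{i,π} + γ P^π V`, i.e. `(I − γP^π)⁻¹ r^{i,π}`. -/
noncomputable def V (g : SG n S A) (π : Profile n S A) (i : Fin n) : Fin S → ℝ :=
  Matrix.mulVec (1 - g.γ • g.Pmat π)⁻¹ (g.rvec π i)

/-- The profile obtained from `π` by letting agent `i` play the pure action `a`
at state `s` (and `π i` at every other state). -/
def devProfile (π : Profile n S A) (i : Fin n) (s : Fin S) (a : Fin (A i)) : Profile n S A :=
  Function.update π i (fun t b => if t = s then (if b = a then (1 : ℝ) else 0) else π i t b)

/-- The one-step-deviation value `V^{π^i,π^{-i}}_{π^i(s,a)=1}(s)`. -/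
noncomputable def Vdev (g : SG n S A) (π : Profile n S A) (i : Fin n) (s : Fin S)
    (a : Fin (A i)) : ℝ :=
  g.V (devProfile π i s a) i s

/-- `D^{π}_{a}(s) = max(0, V^{π^i,π^{-i}}_{π^i(s,a)=1}(s) − V^{π^i,π^{-i}}(s))`. -/
noncomputable def D (g : SG n S A) (π : Profile n S A) (i : Fin n) (s : Fin S)
    (a : Fin (A i)) : ℝ :=
  max 0 (g.Vdev π i s a - g.V π i s)

/-- Nash's improvement map `f` on strategy profiles. -/
noncomputable def f (g : SG n S A) (π : Profile n S A) : Profile n S A :=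
  fun i s a => (π i s a + g.D π i s a) / (1 + ∑ b, g.D π i s b)

/-- `π` is a Markov perfect equilibrium: no agent can improve its value at any state
by unilaterally switching to another behavioral strategy. -/
def IsMPE (g : SG n S A) (π : Profile n S A) : Prop :=
  ∀ (s : Fin S) (i : Fin n) (σ : Fin S → Fin (A i) → ℝ),
    ((∀ t b, 0 ≤ σ t b) ∧ ∀ t, ∑ b, σ t b = 1) →
    g.V (Function.update π i σ) i s ≤ g.V π i s

/-- `π` is an `ε`-approximate Markov perfect equilibrium. -/
def IsApproxMPE (g : SG n S A) (π : Profile n S A) (ε : ℝ) : Prop :=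
  ∀ (s : Fin S) (i : Fin n) (σ : Fin S → Fin (A i) → ℝ),
    ((∀ t b, 0 ≤ σ t b) ∧ ∀ t, ∑ b, σ t b = 1) →
    g.V (Function.update π i σ) i s - ε ≤ g.V π i s

end SG

/-! ### Scarf's dominant sets -/

section Collision

variable {ι β : Type*} [DecidableEq β] {s : Finset ι} {f : ι → β}

theorem image_erase_of_collision [DecidableEq ι] {a b : ι} (hb : b ∈ s) (hab : a ≠ b)
    (hf : f a = f b) :
    (s.erase a).image f = s.image f := by
  refine (image_subset_image (erase_subset _ _)).antisymm fun y hy => ?_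
  obtain ⟨x, hx, rfl⟩ := mem_image.1 hy
  rcases eq_or_ne x a with rfl | hxa
  · exact mem_image.2 ⟨b, mem_erase.2 ⟨hab.symm, hb⟩, hf.symm⟩
  · exact mem_image_of_mem f (mem_erase.2 ⟨hxa, hx⟩)

theorem injOn_erase_of_collision [DecidableEq ι] (hs : #(s.image f) + 1 = #s) {a b : ι}
    (ha : a ∈ s) (hb : b ∈ s) (hab : a ≠ b) (hf : f a = f b) : Set.InjOn f (s.erase a) := by
  rw [← card_image_iff, image_erase_of_collision hb hab hf, card_erase_of_mem ha]
  omega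

theorem exists_unique_collision (hs : #(s.image f) + 1 = #s) :
    ∃ a ∈ s, ∃ b ∈ s, a ≠ b ∧ f a = f b ∧
      ∀ x ∈ s, ∀ y ∈ s, x ≠ y → f x = f y → x = a ∧ y = b ∨ x = b ∧ y = a := by
  have hlt : #(s.image f) < #s := by omega
  classical
  obtain ⟨a, ha, b, hb, hab, hf⟩ := exists_ne_map_eq_of_card_image_lt hlt
  refine ⟨a, ha, b, hb, hab, hf, fun x hx y hy hxy hfxy => ?_⟩
  have h_a : x = a ∨ y = a := by
    by_contra! h
    exact hxy (injOn_erase_of_collision hs ha hb hab hf (by simp [h.1, hx])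
      (by simp [h.2, hy]) hfxy)
  have h_b : x = b ∨ y = b := by
    by_contra! h
    exact hxy (injOn_erase_of_collision hs hb ha hab.symm hf.symm (by simp [h.1, hx])
      (by simp [h.2, hy]) hfxy)
  grind

theorem card_filter_image_erase_eq [DecidableEq ι] (hs : #(s.image f) + 1 = #s) :
    #{a ∈ s | (s.erase a).image f = s.image f} = 2 := by
  obtain ⟨a, ha, b, hb, hab, hf, hunique⟩ := exists_unique_collision hs
  refine card_eq_two.2 ⟨a, b, hab, ?_⟩
  ext x
  simp only [mem_filter, mem_insert, mem_singleton]
  constructor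
  · rintro ⟨hx, himage⟩
    obtain ⟨y, hy, hfyx⟩ := mem_image.1 (himage ▸ mem_image_of_mem f hx)
    have := hunique x hx y (mem_of_mem_erase hy) (ne_of_mem_erase hy).symm hfyx.symm
    tauto
  · rintro (rfl | rfl)
    · exact ⟨ha, image_erase_of_collision hb hab hf⟩
    · exact ⟨hb, image_erase_of_collision ha hab.symm hf.symm⟩

end Collision

section Dominance

variable {W I α : Type*} [LinearOrder α] {u : I → W → α}

/-- Scarf's dominant sets: ranking `W` by each of the criteria `u i`, every point of `W` lies
weakly below all of `X` for at least one criterion. -/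
def IsDominant (u : I → W → α) (X : Finset W) : Prop :=
  ∀ y, ∃ i, ∀ x ∈ X, u i y ≤ u i x

/-- `m` selects, for each criterion `u i`, a lowest point `m i` of `Y`. -/
def IsArgmin (u : I → W → α) (Y : Finset W) (m : I → W) : Prop :=
  ∀ i, m i ∈ Y ∧ ∀ x ∈ Y, u i (m i) ≤ u i x

/-- `y` is highest for the criterion `k` among the points lying strictly above `m l` for every
other criterion `l`. As in the simplex method, these are the points that may be exchanged for an
element of a dominant set. -/
def IsPivot (u : I → W → α) (m : I → W) (k : I) (y : W) : Prop :=
  (∀ l ≠ k, u l (m l) < u l y) ∧ ∀ z, (∀ l ≠ k, u l (m l) < u l z) → u k z ≤ u k y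

theorem IsDominant.mono {X Y : Finset W} (hX : IsDominant u X) (hYX : Y ⊆ X) : IsDominant u Y :=
  fun y => (hX y).imp fun _ hi x hx => hi x (hYX hx)

theorem exists_isArgmin (u : I → W → α) {Y : Finset W} (hY : Y.Nonempty) : ∃ m, IsArgmin u Y m :=
  Classical.skolem.1 fun i => exists_min_image Y (u i) hY

theorem exists_isPivot [Finite W] {m : I → W} {k : I} (h : ∃ z, ∀ l ≠ k, u l (m l) < u l z) :
    ∃ y, IsPivot u m k y :=
  Set.exists_max_image {z | ∀ l ≠ k, u l (m l) < u l z} (u k) (Set.toFinite _) h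

theorem IsPivot.unique (hu : ∀ i, Function.Injective (u i)) {m : I → W} {k : I} {y z : W}
    (hy : IsPivot u m k y) (hz : IsPivot u m k z) : y = z :=
  hu k ((hz.2 y hy.1).antisymm (hy.2 z hz.1))

variable {Y : Finset W} {m : I → W}

theorem IsArgmin.eq_of_le (hu : ∀ i, Function.Injective (u i)) (hm : IsArgmin u Y m) {i : I}
    {x : W} (hx : x ∈ Y) (hle : u i x ≤ u i (m i)) : m i = x :=
  hu i (((hm i).2 x hx).antisymm hle)

theorem IsArgmin.exists_eq (hu : ∀ i, Function.Injective (u i)) (hm : IsArgmin u Y m)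
    (hY : IsDominant u Y) {x : W} (hx : x ∈ Y) : ∃ i, m i = x :=
  (hY x).imp fun i hi => hm.eq_of_le hu hx (hi _ (hm i).1)

theorem IsArgmin.exists_le (hm : IsArgmin u Y m) (hY : IsDominant u Y) (y : W) :
    ∃ i, u i y ≤ u i (m i) :=
  (hY y).imp fun i hi => hi _ (hm i).1

theorem IsPivot.not_isPivot (hm : IsArgmin u Y m) (hY : IsDominant u Y) {i j : I} (hij : i ≠ j)
    {y : W} (hi : IsPivot u m i y) : ¬IsPivot u m j y := fun hj => by
  obtain ⟨l, hl⟩ := hm.exists_le hY y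
  rcases eq_or_ne l i with rfl | hli
  · exact hl.not_gt (hj.1 l hij)
  · exact hl.not_gt (hi.1 l hli)

theorem IsPivot.notMem (hu : ∀ i, Function.Injective (u i)) (hm : IsArgmin u Y m)
    (hY : IsDominant u Y) {i j : I} (hij : i ≠ j) (hmij : m i = m j) {y : W}
    (hy : IsPivot u m i y) : y ∉ Y := fun hyY => by
  obtain ⟨l, rfl⟩ := hm.exists_eq hu hY hyY
  rcases eq_or_ne l i with rfl | hli
  · exact (hy.1 j hij.symm).ne (by rw [hmij])
  · exact (hy.1 l hli).false

variable [DecidableEq W]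

theorem IsPivot.isDominant_insert (hm : IsArgmin u Y m) (hY : IsDominant u Y) {k : I} {y : W}
    (hy : IsPivot u m k y) : IsDominant u (insert y Y) := by
  intro z
  by_contra! hz
  have habove : ∀ l ≠ k, u l (m l) < u l z := fun l hl => by
    obtain ⟨x, hx, hxz⟩ := hz l
    rcases mem_insert.1 hx with rfl | hx
    · exact (hy.1 l hl).trans hxz
    · exact ((hm l).2 x hx).trans_lt hxz
  obtain ⟨x, hx, hxz⟩ := hz k
  rcases mem_insert.1 hx with rfl | hx
  · exact hxz.not_ge (hy.2 z habove)
  · obtain ⟨l, hl⟩ := hm.exists_le hY z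
    rcases eq_or_ne l k with rfl | hlk
    · exact (((hm l).2 x hx).trans_lt hxz).not_ge hl
    · exact (habove l hlk).not_ge hl

theorem IsDominant.exists_argmin_lt (hu : ∀ i, Function.Injective (u i)) (hm : IsArgmin u Y m)
    {y : W} (hyY : y ∉ Y) (hdom : IsDominant u (insert y Y)) (l : I) :
    ∃ k, m k = m l ∧ u k (m k) < u k y := by
  obtain ⟨k, hk⟩ := hdom (m l)
  have hkl : m k = m l := hm.eq_of_le hu (hm l).1 (hk _ (mem_insert_of_mem (hm k).1))
  refine ⟨k, hkl, lt_of_le_of_ne (hkl ▸ hk y (mem_insert_self _ _)) fun heq => hyY ?_⟩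
  exact hu k heq ▸ (hm k).1

theorem IsDominant.isPivot_of_insert {i : I} {y : W} (hm : IsArgmin u Y m)
    (hdom : IsDominant u (insert y Y)) (hy : ∀ l ≠ i, u l (m l) < u l y) : IsPivot u m i y := by
  refine ⟨hy, fun z hz => ?_⟩
  obtain ⟨l, hl⟩ := hdom z
  obtain rfl : l = i := by
    by_contra hli
    exact (hz l hli).not_ge (hl _ (mem_insert_of_mem (hm l).1))
  exact hl y (mem_insert_self _ _)

theorem isDominant_insert_iff (hu : ∀ i, Function.Injective (u i)) (hm : IsArgmin u Y m)
    (hY : IsDominant u Y) {i j : I} (hmij : m i = m j)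
    (hunique : ∀ k l, k ≠ l → m k = m l → k = i ∧ l = j ∨ k = j ∧ l = i) {y : W} (hyY : y ∉ Y) :
    IsDominant u (insert y Y) ↔ IsPivot u m i y ∨ IsPivot u m j y := by
  refine ⟨fun hdom => ?_, fun h => h.elim (·.isDominant_insert hm hY) (·.isDominant_insert hm hY)⟩
  have habove : ∀ l ≠ i, l ≠ j → u l (m l) < u l y := fun l hli hlj => by
    obtain ⟨k, hkl, hk⟩ := hdom.exists_argmin_lt hu hm hyY l
    grind
  obtain ⟨k, hki, hk⟩ := hdom.exists_argmin_lt hu hm hyY i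
  have hkij : k = i ∨ k = j := by grind
  rcases hkij with rfl | rfl
  · exact .inr (hdom.isPivot_of_insert hm fun l hl => by grind)
  · exact .inl (hdom.isPivot_of_insert hm fun l hl => by grind)

variable [Fintype W] [Fintype I]

open scoped Classical in
theorem card_isDominant_insert_eq_two (hu : ∀ i, Function.Injective (u i))
    (hcard : #Y + 1 = Fintype.card I) (hY : IsDominant u Y) {t : W} (ht : t ∈ Y)
    (hroom : ∀ k, ∃ z, ∀ l ≠ k, u l t < u l z) :
    #{y | y ∉ Y ∧ IsDominant u (insert y Y)} = 2 := by
  obtain ⟨m, hm⟩ := exists_isArgmin u ⟨t, ht⟩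
  have himage : univ.image m = Y := by
    ext x
    simp only [mem_image, mem_univ, true_and]
    exact ⟨fun ⟨i, hi⟩ => hi ▸ (hm i).1, hm.exists_eq hu hY⟩
  obtain ⟨i, -, j, -, hij, hmij, hunique⟩ :=
    exists_unique_collision (s := univ) (f := m) (by rwa [himage, card_univ])
  have hpivot : ∀ k, ∃ y, IsPivot u m k y := fun k =>
    exists_isPivot ((hroom k).imp fun z hz l hl => ((hm l).2 t ht).trans_lt (hz l hl))
  obtain ⟨a, ha⟩ := hpivot i
  obtain ⟨b, hb⟩ := hpivot j
  refine card_eq_two.2 ⟨a, b, ?_, ?_⟩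
  · rintro rfl
    exact ha.not_isPivot hm hY hij hb
  · have hext : ∀ y, y ∉ Y → (IsDominant u (insert y Y) ↔ y = a ∨ y = b) := fun y hy => by
      rw [isDominant_insert_iff hu hm hY hmij (by simpa using hunique) hy]
      exact or_congr ⟨fun h => h.unique hu ha, fun h => h ▸ ha⟩
        ⟨fun h => h.unique hu hb, fun h => h ▸ hb⟩
    have haY := ha.notMem hu hm hY hij hmij
    have hbY := hb.notMem hu hm hY hij.symm hmij.symm
    ext y
    simp only [mem_filter, mem_univ, true_and, mem_insert, mem_singleton]
    grind

end Dominance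

section Coloring

variable {W I α : Type*} [LinearOrder α] [Fintype W] [Fintype I] [DecidableEq I]
  {u : I → W → α} {c : W → I} {i₀ : I}

open scoped Classical in
/-- The dominant sets with `k` elements that carry exactly the colours other than `i₀`; those of
size `card I` and `card I - 1` are the rooms and doors of the parity argument. -/
noncomputable def almostRainbow (u : I → W → α) (c : W → I) (i₀ : I) (k : ℕ) :
    Finset (Finset W) :=
  {X | #X = k ∧ IsDominant u X ∧ X.image c = univ.erase i₀}

theorem mem_almostRainbow {k : ℕ} {X : Finset W} :
    X ∈ almostRainbow u c i₀ k ↔ #X = k ∧ IsDominant u X ∧ X.image c = univ.erase i₀ := by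
  simp [almostRainbow]

open scoped Classical in
theorem card_covBy_almostRainbow_eq_two {k : ℕ} (hk : k + 1 = Fintype.card I) {X : Finset W}
    (hX : X ∈ almostRainbow u c i₀ (k + 1)) : #{Y ∈ almostRainbow u c i₀ k | Y ⋖ X} = 2 := by
  obtain ⟨hcard, hdom, himage⟩ := mem_almostRainbow.1 hX
  have hdoors : {Y ∈ almostRainbow u c i₀ k | Y ⋖ X} =
      {a ∈ X | (X.erase a).image c = X.image c}.image X.erase := by
    ext Y
    simp only [mem_filter, mem_almostRainbow, covBy_iff_exists_erase, mem_image]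
    constructor
    · rintro ⟨⟨-, -, hY⟩, a, ha, rfl⟩
      exact ⟨a, ⟨ha, hY.trans himage.symm⟩, rfl⟩
    · rintro ⟨a, ⟨ha, hY⟩, rfl⟩
      refine ⟨⟨?_, hdom.mono (erase_subset _ _), hY.trans himage⟩, a, ha, rfl⟩
      rw [card_erase_of_mem ha, hcard, Nat.add_sub_cancel]
  rw [hdoors, card_image_of_injOn ((erase_injOn X).mono (filter_subset _ X))]
  refine card_filter_image_erase_eq ?_
  rw [himage, card_erase_of_mem (mem_univ _), card_univ]
  omega

open scoped Classical in
theorem card_almostRainbow_covBy [DecidableEq W] (hno : ∀ X, IsDominant u X → X.image c ≠ univ)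
    {k : ℕ} {Y : Finset W} (hY : Y ∈ almostRainbow u c i₀ k) :
    #{X ∈ almostRainbow u c i₀ (k + 1) | Y ⋖ X} = #{y | y ∉ Y ∧ IsDominant u (insert y Y)} := by
  obtain ⟨hcard, -, himage⟩ := mem_almostRainbow.1 hY
  have hrooms : {X ∈ almostRainbow u c i₀ (k + 1) | Y ⋖ X} =
      ({y | y ∉ Y ∧ IsDominant u (insert y Y)} : Finset W).image (insert · Y) := by
    ext X
    simp only [mem_filter, mem_almostRainbow, covBy_iff_exists_insert, mem_image, mem_univ,
      true_and]
    constructor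
    · rintro ⟨⟨-, hX, -⟩, y, hy, rfl⟩
      exact ⟨y, ⟨hy, hX⟩, rfl⟩
    · rintro ⟨y, ⟨hy, hX⟩, rfl⟩
      refine ⟨⟨by rw [card_insert_of_notMem hy, hcard], hX, ?_⟩, y, hy, rfl⟩
      have hne := hno _ hX
      rw [image_insert, himage] at hne ⊢
      rcases eq_or_ne (c y) i₀ with h | h
      · exact absurd (by rw [h, insert_erase (mem_univ _)]) hne
      · exact insert_eq_of_mem (by simp [h])
  rw [hrooms, card_image_of_injOn ((insert_inj_on Y).mono fun y hy => by simp_all)]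

open scoped Classical in
theorem exists_rainbow_of_odd [DecidableEq W] {Y₀ : Finset W} {k : ℕ} (hk : k + 1 = Fintype.card I)
    (hY₀ : Y₀ ∈ almostRainbow u c i₀ k)
    (hone : #{y | y ∉ Y₀ ∧ IsDominant u (insert y Y₀)} = 1)
    (htwo : ∀ Y ∈ almostRainbow u c i₀ k, Y ≠ Y₀ →
      #{y | y ∉ Y ∧ IsDominant u (insert y Y)} = 2) :
    ∃ X, IsDominant u X ∧ X.image c = univ := by
  by_contra! hno
  have hcount := sum_card_bipartiteAbove_eq_sum_card_bipartiteBelow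
    (s := almostRainbow u c i₀ k) (t := almostRainbow u c i₀ (k + 1)) (· ⋖ ·)
  have heven : Even (∑ X ∈ almostRainbow u c i₀ (k + 1),
      #(bipartiteBelow (· ⋖ ·) (almostRainbow u c i₀ k) X)) :=
    even_sum _ fun X hX => by
      rw [bipartiteBelow, card_covBy_almostRainbow_eq_two hk hX]
      exact even_two
  refine Nat.not_even_iff_odd.2 ?_ (hcount ▸ heven)
  rw [odd_sum_iff_odd_card_odd]
  convert odd_one
  refine card_eq_one.2 ⟨Y₀, ?_⟩
  ext Y
  simp only [mem_filter, mem_singleton, bipartiteAbove]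
  constructor
  · rintro ⟨hY, hodd⟩
    by_contra hne
    rw [card_almostRainbow_covBy hno hY, htwo Y hY hne] at hodd
    exact absurd hodd (by decide)
  · rintro rfl
    exact ⟨hY₀, by rw [card_almostRainbow_covBy hno hY₀, hone]; exact odd_one⟩

end Coloring

section Slacks

variable {V I α : Type*} [LinearOrder α] {u : I → V ⊕ I → α}

/-- The points `Sum.inr i` are slacks for the rankings `u`: `Sum.inr i` is lowest for the criterion
`i` and above all points of `V` for every other criterion. -/
structure HasSlacks (u : I → V ⊕ I → α) : Prop where
  slack_le : ∀ i w, u i (.inr i) ≤ u i w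
  lt_slack : ∀ {i j} v, i ≠ j → u i (.inl v) < u i (.inr j)

variable [Fintype I] [DecidableEq I] {i₀ : I}

/-- The set of all slacks except that of `i₀`: the one door that opens to a single room. -/
def slackDoor (V : Type*) (i₀ : I) : Finset (V ⊕ I) :=
  (univ.erase i₀).map .inr

theorem inr_mem_slackDoor {i : I} : .inr i ∈ slackDoor V i₀ ↔ i ≠ i₀ := by
  simp [slackDoor]

theorem HasSlacks.isDominant_slackDoor (hs : HasSlacks u) : IsDominant u (slackDoor V i₀)
  | .inl v => ⟨i₀, by simpa [slackDoor] using fun j hj => (hs.lt_slack v (Ne.symm hj)).le⟩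
  | .inr i => ⟨i, fun x _ => hs.slack_le i x⟩

theorem HasSlacks.isDominant_insert_slackDoor_iff [DecidableEq V]
    (hu : ∀ i, Function.Injective (u i)) (hs : HasSlacks u) {y : V ⊕ I} :
    IsDominant u (insert y (slackDoor V i₀)) ↔ ∀ v, u i₀ (.inl v) ≤ u i₀ y := by
  constructor
  · intro hdom v
    obtain ⟨i, hi⟩ := hdom (.inl v)
    obtain rfl : i = i₀ := by
      by_contra hne
      have hle := hi (.inr i) (mem_insert_of_mem (inr_mem_slackDoor.2 hne))
      exact Sum.inl_ne_inr (hu i (hle.antisymm (hs.slack_le i _)))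
    exact hi y (mem_insert_self _ _)
  · rintro hy (v | i)
    · refine ⟨i₀, fun x hx => ?_⟩
      rcases mem_insert.1 hx with rfl | hx
      · exact hy v
      · obtain ⟨j, hj, rfl⟩ := mem_map.1 hx
        exact (hs.lt_slack v (ne_of_mem_erase hj).symm).le
    · exact ⟨i, fun x _ => hs.slack_le i x⟩

open scoped Classical in
theorem HasSlacks.card_isDominant_insert_slackDoor_eq_one [Fintype V] [Nonempty V]
    [DecidableEq V] (hu : ∀ i, Function.Injective (u i)) (hs : HasSlacks u) :
    #{y | y ∉ slackDoor V i₀ ∧ IsDominant u (insert y (slackDoor V i₀))} = 1 := by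
  simp only [hs.isDominant_insert_slackDoor_iff hu]
  obtain ⟨t, ht⟩ := Finite.exists_max fun v : V => u i₀ (.inl v)
  refine card_eq_one.2 ⟨.inl t, ?_⟩
  ext y
  simp only [mem_filter, mem_univ, true_and, mem_singleton]
  constructor
  · rintro ⟨hy, hmax⟩
    rcases y with v | i
    · exact hu i₀ ((ht v).antisymm (hmax t))
    · obtain rfl : i = i₀ := by simpa [inr_mem_slackDoor] using hy
      exact absurd (hu i ((hmax t).antisymm (hs.slack_le i _))) Sum.inl_ne_inr
  · rintro rfl
    exact ⟨by simp [slackDoor], ht⟩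

theorem HasSlacks.slackDoor_mem_almostRainbow [Fintype V] {c : V → I} {k : ℕ}
    (hk : k + 1 = Fintype.card I) (hs : HasSlacks u) :
    slackDoor V i₀ ∈ almostRainbow u (Sum.elim c id) i₀ k := by
  refine mem_almostRainbow.2 ⟨?_, hs.isDominant_slackDoor, ?_⟩
  · rw [slackDoor, card_map, card_erase_of_mem (mem_univ _), card_univ]
    omega
  · ext
    simp [slackDoor]

theorem exists_inl_mem_of_ne_slackDoor [Fintype V] {c : V → I} {k : ℕ} {Y : Finset (V ⊕ I)}
    (hY : Y ∈ almostRainbow u (Sum.elim c id) i₀ k) (hne : Y ≠ slackDoor V i₀) :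
    ∃ v, .inl v ∈ Y := by
  by_contra! hinl
  refine hne (ext fun x => ?_)
  obtain ⟨-, -, himage⟩ := mem_almostRainbow.1 hY
  rcases x with v | i
  · simp [slackDoor, hinl v]
  · simpa [hinl, inr_mem_slackDoor] using congr(i ∈ $himage)

theorem HasSlacks.exists_rainbow [Finite V] [Nonempty V] [Nonempty I]
    (hu : ∀ i, Function.Injective (u i)) (hs : HasSlacks u) (c : V → I) :
    ∃ X, IsDominant u X ∧ X.image (Sum.elim c id) = univ := by
  classical
  have := Fintype.ofFinite V
  obtain ⟨k, hk⟩ := Nat.exists_eq_add_one.2 (Fintype.card_pos (α := I))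
  let i₀ := Classical.arbitrary I
  refine exists_rainbow_of_odd (i₀ := i₀) hk.symm (hs.slackDoor_mem_almostRainbow hk.symm)
    (hs.card_isDominant_insert_slackDoor_eq_one hu) fun Y hY hne => ?_
  obtain ⟨v, hv⟩ := exists_inl_mem_of_ne_slackDoor hY hne
  obtain ⟨hcard, hdom, -⟩ := mem_almostRainbow.1 hY
  exact card_isDominant_insert_eq_two hu (by rw [hcard, hk]) hdom hv
    fun k => ⟨.inr k, fun l hl => hs.lt_slack v hl⟩

end Slacks

section Scarf

variable {V I α : Type*}

open scoped Classical in
/-- Adjoins slacks to the rankings `u`; ties are broken by the enumeration `e`. -/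
noncomputable def slackRanking {n : ℕ} (u : I → V → α) (e : V ⊕ I ≃ Fin n) (i : I) (w : V ⊕ I) :
    WithBot (WithTop α) ×ₗ Fin n :=
  toLex (w.elim (fun v => ((u i v : WithTop α) : WithBot (WithTop α)))
    (fun j => if j = i then ⊥ else ((⊤ : WithTop α) : WithBot (WithTop α))), e w)

variable {n : ℕ} {u : I → V → α} {e : V ⊕ I ≃ Fin n}

theorem slackRanking_injective (i : I) : Function.Injective (slackRanking u e i) :=
  fun _ _ h => e.injective (congrArg (fun p => (ofLex p).2) h)

variable [LinearOrder α]

theorem le_of_slackRanking_le {i : I} {v v' : V}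
    (h : slackRanking u e i (.inl v) ≤ slackRanking u e i (.inl v')) : u i v ≤ u i v' := by
  simpa [slackRanking] using Prod.Lex.monotone_fst _ _ h

theorem hasSlacks_slackRanking : HasSlacks (slackRanking u e) where
  slack_le i w := by
    rcases w with v | j
    · exact (Prod.Lex.toLex_lt_toLex.2 (.inl (by simp))).le
    · rcases eq_or_ne j i with rfl | hji
      · exact le_rfl
      · exact (Prod.Lex.toLex_lt_toLex.2 (.inl (by simp [hji]))).le
  lt_slack v hij := Prod.Lex.toLex_lt_toLex.2 (.inl (by
    simpa only [Sum.elim_inl, Sum.elim_inr, if_neg hij.symm]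
      using WithBot.coe_lt_coe.2 (WithTop.coe_lt_top _)))

theorem exists_finset_forall_exists_le [Finite V] [Finite I] (u : I → V → α) (c : V → I) :
    ∃ T : Finset V, ∀ y, ∃ v ∈ T, ∀ x ∈ T, u (c v) y ≤ u (c v) x := by
  classical
  cases isEmpty_or_nonempty V
  · exact ⟨∅, isEmptyElim⟩
  have := Fintype.ofFinite I
  have : Nonempty I := .map c inferInstance
  let e := Finite.equivFin (V ⊕ I)
  obtain ⟨X, hdom, hrainbow⟩ :=
    (hasSlacks_slackRanking (u := u) (e := e)).exists_rainbow slackRanking_injective c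
  refine ⟨X.toLeft, fun y => ?_⟩
  obtain ⟨i, hi⟩ := hdom (.inl y)
  obtain ⟨w, hw, rfl⟩ := mem_image.1 (hrainbow.symm ▸ mem_univ i)
  rcases w with v | j
  · exact ⟨v, mem_toLeft.2 hw, fun x hx => le_of_slackRanking_le (hi _ (mem_toLeft.1 hx))⟩
  · -- A slack is lowest for its own criterion, so it does not dominate `y`.
    have hle := (hi _ hw).antisymm (hasSlacks_slackRanking.slack_le j _)
    exact absurd (slackRanking_injective j hle) Sum.inl_ne_inr

end Scarf

/-! ### Brouwer's theorem on products of simplices -/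

section Simplex

open Filter Topology

variable {I : Type*} [Fintype I]

theorem sub_le_one_sub_sum_of_le {m : I → ℝ} {x : stdSimplex ℝ I} (hm : ∀ i, m i ≤ x i) (i : I) :
    x i - m i ≤ 1 - ∑ j, m j := by
  rw [← stdSimplex.sum_eq_one x, ← sum_sub_distrib]
  exact single_le_sum (f := fun j => x j - m j) (fun j _ => sub_nonneg.2 (hm j)) (mem_univ i)

theorem dist_le_one_sub_sum_of_le {m : I → ℝ} {x y : stdSimplex ℝ I} (hx : ∀ i, m i ≤ x i)
    (hy : ∀ i, m i ≤ y i) : dist x y ≤ 1 - ∑ i, m i := by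
  have hsum : 0 ≤ 1 - ∑ i, m i :=
    sub_nonneg.2 ((sum_le_sum fun i _ => hx i).trans_eq (stdSimplex.sum_eq_one x))
  refine (dist_pi_le_iff hsum).2 fun i => ?_
  change |x i - y i| ≤ _
  have := sub_le_one_sub_sum_of_le hx i
  have := sub_le_one_sub_sum_of_le hy i
  exact abs_le.2 ⟨by linarith [hx i], by linarith [hy i]⟩

theorem exists_forall_lt_of_card_mul_lt [Nonempty I] {t : Set (stdSimplex ℝ I)} {δ : ℝ}
    (ht : ∀ y, ∃ v ∈ t, dist y v < δ) {m : I → ℝ} (hm : ∀ i, 0 ≤ m i)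
    (hsum : Fintype.card I * δ < 1 - ∑ i, m i) : ∃ v ∈ t, ∀ i, m i < v i := by
  set ρ := (1 - ∑ i, m i) / Fintype.card I
  have hcard : (0 : ℝ) < Fintype.card I := by exact_mod_cast Fintype.card_pos
  have hρ : δ < ρ := (lt_div_iff₀' hcard).2 hsum
  obtain ⟨w, -, hw⟩ := ht (stdSimplex.barycenter)
  have hδ : 0 ≤ δ := dist_nonneg.trans hw.le
  let y : stdSimplex ℝ I := ⟨fun i => m i + ρ, fun i => by have := hm i; linarith, by
    rw [sum_add_distrib, sum_const, card_univ, nsmul_eq_mul, mul_div_cancel₀ _ hcard.ne']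
    ring⟩
  obtain ⟨v, hv, hyv⟩ := ht y
  refine ⟨v, hv, fun i => ?_⟩
  have hi : dist (y i) (v i) ≤ dist y v := dist_le_pi_dist y.1 v.1 i
  have : m i + ρ - v i < δ := (le_abs_self _).trans_lt (hi.trans_lt hyv)
  linarith

theorem exists_lower_bound_of_coords {T : Finset (stdSimplex ℝ I)} (hT : T.Nonempty)
    (C : Finset I) :
    ∃ m : I → ℝ, (∀ i, 0 ≤ m i) ∧ (∀ x ∈ T, ∀ i, m i ≤ x i) ∧ (∀ i ∈ C, ∃ x ∈ T, m i = x i) ∧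
      ∀ i ∉ C, m i = 0 := by
  classical
  choose! p hpT hp using fun i : I => exists_min_image T (fun x => x i) hT
  refine ⟨fun i => if i ∈ C then p i i else 0, fun i => ?_, fun x hx i => ?_, fun i hi => ?_,
    fun i hi => if_neg hi⟩
  · dsimp only
    split_ifs
    exacts [stdSimplex.zero_le _ _, le_rfl]
  · dsimp only
    split_ifs
    exacts [hp i x hx, stdSimplex.zero_le _ _]
  · exact ⟨p i, hpT i, if_pos hi⟩

theorem exists_forall_le_or_exists_dist_le [Nonempty I] (c : stdSimplex ℝ I → I) {ε : ℝ}
    (hε : 0 < ε) : ∃ x : stdSimplex ℝ I, ∀ i, x i ≤ ε ∨ ∃ y, c y = i ∧ dist y x ≤ ε := by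
  classical
  have hcard : (0 : ℝ) < Fintype.card I := by exact_mod_cast Fintype.card_pos
  obtain ⟨t, -, htfin, ht⟩ := finite_cover_balls_of_compact
    (isCompact_univ (X := stdSimplex ℝ I)) (div_pos hε hcard)
  have hnet : ∀ y, ∃ v ∈ t, dist y v < ε / Fintype.card I := fun y => by
    simpa only [Set.mem_iUnion, Metric.mem_ball, exists_prop] using ht (Set.mem_univ y)
  have := htfin.to_subtype
  obtain ⟨T', hT'⟩ := exists_finset_forall_exists_le (V := t) (fun i v => v.1 i) (fun v => c v)
  obtain ⟨T, hT⟩ : ∃ T : Finset (stdSimplex ℝ I),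
      ∀ y ∈ t, ∃ v ∈ T, ∀ x ∈ T, y (c v) ≤ x (c v) :=
    ⟨T'.map (.subtype _), by simpa using hT'⟩
  obtain ⟨v, hv, -⟩ := hnet stdSimplex.barycenter
  obtain ⟨x, hxT, -⟩ := hT v hv
  obtain ⟨m, hm_nonneg, hm_le, hm_eq, hm_zero⟩ := exists_lower_bound_of_coords ⟨x, hxT⟩ (T.image c)
  have hsum : 1 - ∑ i, m i ≤ ε := by
    -- Otherwise a net point exceeds all minima, against the choice of `T`.
    by_contra! hlt
    obtain ⟨y, hy, hmy⟩ :=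
      exists_forall_lt_of_card_mul_lt hnet hm_nonneg (by rwa [mul_div_cancel₀ _ hcard.ne'])
    obtain ⟨z, hzT, hz⟩ := hT y hy
    obtain ⟨w, hwT, hw⟩ := hm_eq (c z) (mem_image_of_mem c hzT)
    exact (hmy (c z)).not_ge (hw ▸ hz w hwT)
  refine ⟨x, fun i => ?_⟩
  by_cases hi : i ∈ T.image c
  · obtain ⟨y, hyT, rfl⟩ := mem_image.1 hi
    exact .inr ⟨y, rfl, (dist_le_one_sub_sum_of_le (hm_le y hyT) (hm_le x hxT)).trans hsum⟩
  · have := sub_le_one_sub_sum_of_le (hm_le x hxT) i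
    rw [hm_zero i hi, sub_zero] at this
    exact .inl (this.trans hsum)

theorem exists_forall_mem_or_eq_zero [Nonempty I] {A : I → Set (stdSimplex ℝ I)}
    (hA : ∀ i, IsClosed (A i)) (hcover : ∀ x, ∃ i, x ∈ A i) :
    ∃ x : stdSimplex ℝ I, ∀ i, x ∈ A i ∨ x i = 0 := by
  choose c hc using hcover
  choose x hx using fun k : ℕ =>
    exists_forall_le_or_exists_dist_le c (Nat.one_div_pos_of_nat (α := ℝ) (n := k))
  obtain ⟨a, φ, hφ, hlim⟩ := CompactSpace.tendsto_subseq x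
  refine ⟨a, fun i => or_iff_not_imp_right.2 fun hai => ?_⟩
  have hzero : Tendsto (fun k => 1 / ((φ k : ℝ) + 1)) atTop (𝓝 0) :=
    tendsto_one_div_add_atTop_nhds_zero_nat.comp hφ.tendsto_atTop
  have hpos : 0 < a i := (stdSimplex.zero_le a i).lt_of_ne' hai
  have hcoord : Tendsto (fun k => x (φ k) i) atTop (𝓝 (a i)) :=
    ((continuous_apply i).comp continuous_subtype_val).continuousAt.tendsto.comp hlim
  rw [← (hA i).closure_eq, Metric.mem_closure_iff]
  intro ε hε
  obtain ⟨k, ⟨hk, hkε⟩, hka⟩ := (((hzero.eventually_lt hcoord hpos).and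
    (hzero.eventually_lt_const (half_pos hε))).and
      (hlim.eventually (Metric.ball_mem_nhds a (half_pos hε)))).exists
  obtain ⟨y, rfl, hy⟩ := (hx (φ k) i).resolve_left hk.not_ge
  refine ⟨y, hc y, ?_⟩
  calc dist a y ≤ dist (x (φ k)) a + dist y (x (φ k)) := by
        rw [add_comm, dist_comm a y]
        exact dist_triangle _ _ _
    _ < ε / 2 + ε / 2 := add_lt_add hka (hy.trans_lt hkε)
    _ = ε := add_halves ε

end Simplex

section FixedPoint

/-- A space has the fixed point property if each of its continuous self-maps has a fixed point. -/
def FixedPointProperty (X : Type*) [TopologicalSpace X] : Prop :=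
  ∀ F : C(X, X), ∃ x, Function.IsFixedPt F x

theorem FixedPointProperty.of_leftInverse {X Y : Type*} [TopologicalSpace X] [TopologicalSpace Y]
    (hY : FixedPointProperty Y) {e : C(X, Y)} {r : C(Y, X)} (hr : Function.LeftInverse r e) :
    FixedPointProperty X := fun F => by
  obtain ⟨y, hy⟩ := hY (e.comp (F.comp r))
  exact ⟨r y, (hr _).symm.trans (congrArg r hy)⟩

variable {I : Type*} [Fintype I]

theorem fixedPointProperty_stdSimplex [Nonempty I] : FixedPointProperty (stdSimplex ℝ I) := by
  intro F
  have hcoord : ∀ i, Continuous fun x : stdSimplex ℝ I => x i := fun i =>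
    (continuous_apply i).comp continuous_subtype_val
  obtain ⟨x, hx⟩ := exists_forall_mem_or_eq_zero (A := fun i => {x | x i ≤ F x i})
    (fun i => isClosed_le (hcoord i) ((hcoord i).comp F.continuous)) fun x => by
      obtain ⟨i, -, hi⟩ := exists_le_of_sum_le (f := x) (g := F x) univ_nonempty
        ((stdSimplex.sum_eq_one x).trans (stdSimplex.sum_eq_one _).symm).le
      exact ⟨i, hi⟩
  have hle : ∀ i, x i ≤ F x i := fun i => (hx i).elim id fun h => h ▸ stdSimplex.zero_le _ i
  have hsum : ∑ i, x i = ∑ i, F x i := by rw [stdSimplex.sum_eq_one, stdSimplex.sum_eq_one]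
  refine ⟨x, stdSimplex.ext (funext fun i => ?_)⟩
  exact ((sum_eq_sum_iff_of_le fun i _ => hle i).1 hsum i (mem_univ i)).symm

/-- A continuous map of the positive orthant onto the standard simplex that fixes the simplex:
excess mass is scaled down and missing mass is spread uniformly. -/
noncomputable def normalizeMass (z : I → ℝ) (i : I) : ℝ :=
  (z i + max 0 (1 - ∑ j, z j) / Fintype.card I) / max 1 (∑ j, z j)

theorem continuous_normalizeMass : Continuous (normalizeMass : (I → ℝ) → I → ℝ) := by
  refine continuous_pi fun i => .div (by fun_prop) (by fun_prop) fun z => ?_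
  exact (zero_lt_one.trans_le (le_max_left _ _)).ne'

theorem normalizeMass_mem_stdSimplex [Nonempty I] {z : I → ℝ} (hz : ∀ i, 0 ≤ z i) :
    normalizeMass z ∈ stdSimplex ℝ I := by
  have hcard : (Fintype.card I : ℝ) ≠ 0 := by exact_mod_cast Fintype.card_ne_zero
  refine ⟨fun i => div_nonneg (add_nonneg (hz i) (by positivity)) (by positivity), ?_⟩
  simp only [normalizeMass]
  rw [← sum_div, sum_add_distrib, sum_const, card_univ, nsmul_eq_mul, mul_div_cancel₀ _ hcard]
  rcases le_total (∑ j, z j) 1 with h | h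
  · rw [max_eq_left h, max_eq_right (sub_nonneg.2 h), add_sub_cancel, div_one]
  · rw [max_eq_right h, max_eq_left (sub_nonpos.2 h), add_zero, div_self (by linarith)]

theorem normalizeMass_eq_self {z : I → ℝ} (hz : ∑ i, z i = 1) : normalizeMass z = z := by
  funext i
  simp [normalizeMass, hz]

theorem fixedPointProperty_pi_stdSimplex {J : Type*} [Finite J] {B : J → Type*}
    [∀ j, Fintype (B j)] [∀ j, Nonempty (B j)] :
    FixedPointProperty (∀ j, stdSimplex ℝ (B j)) := by
  cases isEmpty_or_nonempty J
  · exact fun F => ⟨isEmptyElim, Subsingleton.elim _ _⟩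
  have := Fintype.ofFinite J
  have : Nonempty (Σ j, B j) := nonempty_sigma.2 ⟨Classical.arbitrary J, inferInstance⟩
  have hcard : (Fintype.card J : ℝ) ≠ 0 := by exact_mod_cast Fintype.card_ne_zero
  let e : C(∀ j, stdSimplex ℝ (B j), stdSimplex ℝ (Σ j, B j)) :=
    { toFun := fun p => ⟨fun jb => p jb.1 jb.2 / Fintype.card J,
        fun jb => div_nonneg (stdSimplex.zero_le _ _) (Nat.cast_nonneg _), by
          have hp : ∀ j, ∑ b, p j b = 1 := fun j => stdSimplex.sum_eq_one (p j)
          simp only [Fintype.sum_sigma, ← sum_div, hp, sum_const, card_univ, nsmul_one,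
            div_self hcard]⟩
      continuous_toFun := .subtype_mk (continuous_pi fun jb => .div_const
        ((continuous_apply jb.2).comp (continuous_subtype_val.comp (continuous_apply jb.1))) _) _ }
  let r : C(stdSimplex ℝ (Σ j, B j), ∀ j, stdSimplex ℝ (B j)) :=
    { toFun := fun q j => ⟨normalizeMass fun b => Fintype.card J * q ⟨j, b⟩,
        normalizeMass_mem_stdSimplex fun b =>
          mul_nonneg (Nat.cast_nonneg _) (stdSimplex.zero_le _ _)⟩
      continuous_toFun := continuous_pi fun j => .subtype_mk (continuous_normalizeMass.comp
        (continuous_pi fun b => continuous_const.mul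
          ((continuous_apply _).comp continuous_subtype_val))) _ }
  refine fixedPointProperty_stdSimplex.of_leftInverse (e := e) (r := r) fun p => ?_
  funext j
  refine Subtype.ext ?_
  change normalizeMass (fun b => (Fintype.card J : ℝ) * (p j b / Fintype.card J)) = p j
  simp only [mul_div_cancel₀ _ hcard]
  exact normalizeMass_eq_self (stdSimplex.sum_eq_one _)

end FixedPoint

/-! ### Equilibria of discounted games -/

section DiscountedStochastic

open Matrix

variable {ι : Type*} [Fintype ι] [DecidableEq ι] {K : Type*} [Field K] [LinearOrder K]
  [IsStrictOrderedRing K] {M : Matrix ι ι K} {γ : K}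

theorem nonpos_of_le_smul_mulVec (hM : M ∈ rowStochastic K ι) (hγ₀ : 0 ≤ γ) (hγ₁ : γ < 1)
    {w : ι → K} (hw : w ≤ γ • M *ᵥ w) : w ≤ 0 := by
  cases isEmpty_or_nonempty ι
  · exact isEmptyElim
  obtain ⟨t, ht⟩ := Finite.exists_max w
  have hmean : (M *ᵥ w) t ≤ w t := calc
    ∑ j, M t j * w j ≤ ∑ j, M t j * w t :=
      sum_le_sum fun j _ => mul_le_mul_of_nonneg_left (ht j) (nonneg_of_mem_rowStochastic hM)
    _ = w t := by rw [← sum_mul, sum_row_of_mem_rowStochastic hM, one_mul]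
  have hdiscount : w t ≤ γ * w t :=
    (hw t).trans (mul_le_mul_of_nonneg_left hmean hγ₀)
  exact fun i => (ht i).trans (by change w t ≤ 0; nlinarith)

theorem isUnit_one_sub_smul (hM : M ∈ rowStochastic K ι) (hγ₀ : 0 ≤ γ) (hγ₁ : γ < 1) :
    IsUnit (1 - γ • M) := by
  refine mulVec_injective_iff_isUnit.1 fun v w hvw => ?_
  have hfix : v - w = γ • M *ᵥ (v - w) := by
    have : (1 - γ • M) *ᵥ (v - w) = 0 := by rw [mulVec_sub]; exact sub_eq_zero.2 hvw
    rwa [sub_mulVec, one_mulVec, smul_mulVec, sub_eq_zero] at this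
  refine le_antisymm (sub_nonpos.1 (nonpos_of_le_smul_mulVec hM hγ₀ hγ₁ hfix.le)) ?_
  refine sub_nonpos.1 (nonpos_of_le_smul_mulVec hM hγ₀ hγ₁ (le_of_eq ?_))
  rw [← neg_sub, mulVec_neg, smul_neg, ← hfix]

theorem inv_one_sub_smul_mulVec_eq (hM : M ∈ rowStochastic K ι) (hγ₀ : 0 ≤ γ) (hγ₁ : γ < 1)
    (r : ι → K) :
    (1 - γ • M)⁻¹ *ᵥ r = r + γ • M *ᵥ ((1 - γ • M)⁻¹ *ᵥ r) := by
  have hdet := (isUnit_iff_isUnit_det _).1 (isUnit_one_sub_smul hM hγ₀ hγ₁)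
  have hsolve : (1 - γ • M) *ᵥ ((1 - γ • M)⁻¹ *ᵥ r) = r := by
    rw [mulVec_mulVec, mul_nonsing_inv _ hdet, one_mulVec]
  rwa [sub_mulVec, one_mulVec, smul_mulVec, sub_eq_iff_eq_add] at hsolve

theorem le_inv_one_sub_smul_mulVec (hM : M ∈ rowStochastic K ι) (hγ₀ : 0 ≤ γ) (hγ₁ : γ < 1)
    {r w : ι → K} (hw : w ≤ r + γ • M *ᵥ w) : w ≤ (1 - γ • M)⁻¹ *ᵥ r := by
  set v := (1 - γ • M)⁻¹ *ᵥ r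
  have hbellman : v = r + γ • M *ᵥ v := inv_one_sub_smul_mulVec_eq hM hγ₀ hγ₁ r
  refine sub_nonpos.1 (nonpos_of_le_smul_mulVec hM hγ₀ hγ₁ ?_)
  calc w - v ≤ r + γ • M *ᵥ w - v := sub_le_sub_right hw v
    _ = γ • M *ᵥ (w - v) := by
      nth_rw 1 [hbellman]
      rw [add_sub_add_left_eq_sub, mulVec_sub, smul_sub]

theorem inv_one_sub_smul_mulVec_le (hM : M ∈ rowStochastic K ι) (hγ₀ : 0 ≤ γ) (hγ₁ : γ < 1)
    {r w : ι → K} (hw : r + γ • M *ᵥ w ≤ w) : (1 - γ • M)⁻¹ *ᵥ r ≤ w := by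
  have hneg : -w ≤ -r + γ • M *ᵥ (-w) := by
    rw [mulVec_neg, smul_neg, ← neg_add]
    exact neg_le_neg hw
  simpa [mulVec_neg] using le_inv_one_sub_smul_mulVec hM hγ₀ hγ₁ hneg

theorem continuous_inv_one_sub_smul_mulVec {Y : Type*} [TopologicalSpace Y] {γ : ℝ}
    {M : Y → Matrix ι ι ℝ} {r : Y → ι → ℝ} (hM : ∀ y, M y ∈ rowStochastic ℝ ι) (hγ₀ : 0 ≤ γ)
    (hγ₁ : γ < 1) (hMcont : Continuous M) (hr : Continuous r) :
    Continuous fun y => (1 - γ • M y)⁻¹ *ᵥ r y := by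
  have hcont : Continuous fun y => 1 - γ • M y := by fun_prop
  have hdet : ∀ y, (1 - γ • M y).det ≠ 0 := fun y =>
    ((isUnit_iff_isUnit_det _).1 (isUnit_one_sub_smul (hM y) hγ₀ hγ₁)).ne_zero
  simp only [Matrix.inv_def, Ring.inverse_eq_inv']
  exact ((hcont.matrix_det.inv₀ hdet).smul hcont.matrix_adjugate).matrix_mulVec hr

end DiscountedStochastic

theorem exists_pos_and_le_sum_mul {B : Type*} [Fintype B] {p : B → ℝ} (hp : p ∈ stdSimplex ℝ B)
    (q : B → ℝ) : ∃ b, 0 < p b ∧ q b ≤ ∑ c, p c * q c := by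
  by_contra! hlt
  obtain ⟨b, -, hb⟩ : ∃ b ∈ univ, 0 < p b :=
    exists_lt_of_sum_lt (by simp [hp.2])
  set mean := ∑ c, p c * q c
  have hmean : ∑ c, p c * mean < mean := by
    refine sum_lt_sum (fun c _ => ?_) ⟨b, mem_univ b, mul_lt_mul_of_pos_left (hlt b hb) hb⟩
    rcases (hp.1 c).eq_or_lt with hc | hc
    · simp [← hc]
    · exact mul_le_mul_of_nonneg_left (hlt c hc).le hc.le
  rw [← sum_mul, hp.2, one_mul] at hmean
  exact hmean.false

namespace SG

section Profiles

variable {n S : ℕ} {A : Fin n → ℕ} {π : Profile n S A}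

theorem isProfile_iff_mem_stdSimplex :
    IsProfile π ↔ ∀ i s, π i s ∈ stdSimplex ℝ (Fin (A i)) :=
  ⟨fun h i s => ⟨h.1 i s, h.2 i s⟩, fun h => ⟨fun i s => (h i s).1, fun i s => (h i s).2⟩⟩

theorem fixedPointProperty_isProfile (hA : ∀ i, 0 < A i) :
    FixedPointProperty {π : Profile n S A // IsProfile π} := by
  have : ∀ is : Fin n × Fin S, Nonempty (Fin (A is.1)) := fun is => ⟨⟨0, hA is.1⟩⟩
  let e : C({π : Profile n S A // IsProfile π},
      ∀ is : Fin n × Fin S, stdSimplex ℝ (Fin (A is.1))) :=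
    { toFun := fun π is => ⟨π.1 is.1 is.2, isProfile_iff_mem_stdSimplex.1 π.2 is.1 is.2⟩
      continuous_toFun := continuous_pi fun is =>
        ((continuous_apply_apply is.1 is.2).comp continuous_subtype_val).subtype_mk _ }
  let r : C(∀ is : Fin n × Fin S, stdSimplex ℝ (Fin (A is.1)),
      {π : Profile n S A // IsProfile π}) :=
    { toFun := fun p => ⟨fun i s => (p (i, s)).1,
        isProfile_iff_mem_stdSimplex.2 fun i s => (p (i, s)).2⟩
      continuous_toFun := by fun_prop }
  exact fixedPointProperty_pi_stdSimplex.of_leftInverse (e := e) (r := r) fun _ => rfl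

theorem IsProfile.update (hπ : IsProfile π) {i : Fin n} {σ : Fin S → Fin (A i) → ℝ}
    (hσ : ∀ s, σ s ∈ stdSimplex ℝ (Fin (A i))) : IsProfile (Function.update π i σ) := by
  rw [isProfile_iff_mem_stdSimplex] at hπ ⊢
  intro j s
  rcases eq_or_ne j i with rfl | hji
  · rw [Function.update_self]
    exact hσ s
  · rw [Function.update_of_ne hji]
    exact hπ j s

theorem IsProfile.devProfile (hπ : IsProfile π) (i : Fin n) (s : Fin S) (a : Fin (A i)) :
    IsProfile (devProfile π i s a) := by
  refine hπ.update fun t => ?_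
  by_cases hts : t = s
  · convert single_mem_stdSimplex ℝ a using 1
    ext b
    simp [hts, Pi.single_apply]
  · simpa [hts] using isProfile_iff_mem_stdSimplex.1 hπ i t

theorem jointProb_nonneg (hπ : IsProfile π) (s : Fin S) (a : ∀ i, Fin (A i)) :
    0 ≤ jointProb π s a :=
  prod_nonneg fun i _ => hπ.1 i s (a i)

theorem sum_jointProb (hπ : IsProfile π) (s : Fin S) : ∑ a, jointProb π s a = 1 := by
  simp only [jointProb, ← Fintype.prod_sum fun i => π i s, hπ.2, prod_const_one]

theorem jointProb_update (i : Fin n) (σ : Fin S → Fin (A i) → ℝ) (s : Fin S)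
    (a : ∀ i, Fin (A i)) :
    jointProb (Function.update π i σ) s a = σ s (a i) * ∏ j ∈ univ.erase i, π j s (a j) := by
  rw [jointProb, ← mul_prod_erase _ _ (mem_univ i), Function.update_self]
  congr 1
  exact prod_congr rfl fun j hj => by rw [Function.update_of_ne (ne_of_mem_erase hj)]

theorem jointProb_update_eq_sum (i : Fin n) (σ : Fin S → Fin (A i) → ℝ) (s : Fin S)
    (a : ∀ i, Fin (A i)) :
    jointProb (Function.update π i σ) s a =
      ∑ b, σ s b * jointProb (devProfile π i s b) s a := by
  simp [devProfile, jointProb_update]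

theorem jointProb_devProfile_of_ne {i : Fin n} {s t : Fin S} (hts : t ≠ s) (b : Fin (A i))
    (a : ∀ i, Fin (A i)) : jointProb (devProfile π i s b) t a = jointProb π t a := by
  rw [devProfile, jointProb_update, if_neg hts]
  exact mul_prod_erase univ (fun j => π j t (a j)) (mem_univ i)

end Profiles

section Bellman

open Matrix

variable {n S : ℕ} {A : Fin n → ℕ} (g : SG n S A) {π : Profile n S A}

/-- Agent `i`'s Bellman operator under the profile `π`: the expected one-step reward plus the
discounted expectation of the continuation values `v`. -/
noncomputable def bellman (π : Profile n S A) (i : Fin n) (v : Fin S → ℝ) (s : Fin S) : ℝ :=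
  ∑ a, jointProb π s a * (g.r i s a + g.γ * ∑ s', g.P s a s' * v s')

theorem bellman_eq_rvec_add (π : Profile n S A) (i : Fin n) (v : Fin S → ℝ) :
    g.bellman π i v = g.rvec π i + g.γ • g.Pmat π *ᵥ v := by
  funext s
  simp only [bellman, mul_add, sum_add_distrib, Pi.add_apply, Pi.smul_apply, smul_eq_mul, rvec,
    Pmat, mulVec, dotProduct, sum_mul, mul_sum]
  congr 1
  rw [sum_comm]
  exact sum_congr rfl fun a _ => sum_congr rfl fun s' _ => by ring

theorem Pmat_mem_rowStochastic (hπ : IsProfile π) : g.Pmat π ∈ rowStochastic ℝ (Fin S) := by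
  refine mem_rowStochastic_iff_sum.2 ⟨fun s s' => ?_, fun s => ?_⟩
  · exact sum_nonneg fun a _ => mul_nonneg (jointProb_nonneg hπ s a) (g.P_nonneg s a s')
  · simp only [Pmat]
    rw [sum_comm]
    simp only [← mul_sum, g.P_sum_one, mul_one, sum_jointProb hπ]

theorem bellman_V (hπ : IsProfile π) (i : Fin n) : g.bellman π i (g.V π i) = g.V π i :=
  (g.bellman_eq_rvec_add π i _).trans (inv_one_sub_smul_mulVec_eq (g.Pmat_mem_rowStochastic hπ)
    g.γ_nonneg g.γ_lt_one _).symm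

theorem le_V_of_le_bellman (hπ : IsProfile π) {i : Fin n} {v : Fin S → ℝ}
    (hv : v ≤ g.bellman π i v) : v ≤ g.V π i :=
  le_inv_one_sub_smul_mulVec (g.Pmat_mem_rowStochastic hπ) g.γ_nonneg g.γ_lt_one
    (hv.trans_eq (g.bellman_eq_rvec_add π i v))

theorem V_le_of_bellman_le (hπ : IsProfile π) {i : Fin n} {v : Fin S → ℝ}
    (hv : g.bellman π i v ≤ v) : g.V π i ≤ v :=
  inv_one_sub_smul_mulVec_le (g.Pmat_mem_rowStochastic hπ) g.γ_nonneg g.γ_lt_one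
    ((g.bellman_eq_rvec_add π i v).symm.trans_le hv)

theorem bellman_mono (hπ : IsProfile π) (i : Fin n) : Monotone (g.bellman π i) :=
  fun v w hvw s => sum_le_sum fun a _ => by
    have := g.γ_nonneg
    have := jointProb_nonneg hπ s a
    gcongr with s' _
    · exact g.P_nonneg s a s'
    · exact hvw s'

theorem bellman_update (i : Fin n) (σ : Fin S → Fin (A i) → ℝ) (v : Fin S → ℝ) (s : Fin S) :
    g.bellman (Function.update π i σ) i v s =
      ∑ b, σ s b * g.bellman (devProfile π i s b) i v s := by
  simp only [bellman, jointProb_update_eq_sum i σ, sum_mul, mul_sum, mul_assoc]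
  exact sum_comm

/-- The value to agent `i` of playing `a` at state `s` once and following `π` ever after, as
opposed to `Vdev`, for which `a` is played at every visit of `s`. -/
noncomputable def actionValue (π : Profile n S A) (i : Fin n) (s : Fin S) (a : Fin (A i)) : ℝ :=
  g.bellman (devProfile π i s a) i (g.V π i) s

theorem V_eq_sum_actionValue (hπ : IsProfile π) (i : Fin n) (s : Fin S) :
    g.V π i s = ∑ a, π i s a * g.actionValue π i s a := by
  have hmix := g.bellman_update (π := π) i (π i) (g.V π i) s
  rwa [Function.update_eq_self, g.bellman_V hπ] at hmix

theorem bellman_devProfile_V (hπ : IsProfile π) (i : Fin n) (s : Fin S) (a : Fin (A i)) :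
    g.bellman (devProfile π i s a) i (g.V π i) =
      Function.update (g.V π i) s (g.actionValue π i s a) := by
  refine Function.eq_update_iff.2 ⟨rfl, fun t hts => ?_⟩
  rw [← congrFun (g.bellman_V hπ i) t]
  simp only [bellman, jointProb_devProfile_of_ne hts]

theorem V_lt_Vdev_iff (hπ : IsProfile π) (i : Fin n) (s : Fin S) (a : Fin (A i)) :
    g.V π i s < g.Vdev π i s a ↔ g.V π i s < g.actionValue π i s a := by
  have hdev := hπ.devProfile i s a
  constructor
  · contrapose!
    intro hle
    refine g.V_le_of_bellman_le hdev ?_ s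
    rw [g.bellman_devProfile_V hπ]
    exact update_le_self_iff.2 hle
  · intro hlt
    have hV : g.V π i ≤ g.V (devProfile π i s a) i := by
      refine g.le_V_of_le_bellman hdev ?_
      rw [g.bellman_devProfile_V hπ]
      exact le_update_self_iff.2 hlt.le
    calc g.V π i s < g.actionValue π i s a := hlt
      _ ≤ g.bellman (devProfile π i s a) i (g.V (devProfile π i s a) i) s :=
        g.bellman_mono hdev i hV s
      _ = g.Vdev π i s a := congrFun (g.bellman_V hdev i) s

theorem isMPE_of_actionValue_le (hπ : IsProfile π)
    (h : ∀ i s a, g.actionValue π i s a ≤ g.V π i s) : g.IsMPE π := by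
  intro s i σ hσ
  refine g.V_le_of_bellman_le (hπ.update fun t => ⟨hσ.1 t, hσ.2 t⟩) (fun t => ?_) s
  calc g.bellman (Function.update π i σ) i (g.V π i) t
      = ∑ a, σ t a * g.actionValue π i t a := g.bellman_update i σ _ t
    _ ≤ ∑ a, σ t a * g.V π i t :=
      sum_le_sum fun a _ => mul_le_mul_of_nonneg_left (h i t a) (hσ.1 t a)
    _ = g.V π i t := by rw [← sum_mul, hσ.2, one_mul]

end Bellman

section ImprovementMap

variable {n S : ℕ} {A : Fin n → ℕ} (g : SG n S A) {π : Profile n S A}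

theorem D_nonneg (π : Profile n S A) (i : Fin n) (s : Fin S) (a : Fin (A i)) : 0 ≤ g.D π i s a :=
  le_max_left _ _

theorem one_add_sum_D_pos (π : Profile n S A) (i : Fin n) (s : Fin S) :
    0 < 1 + ∑ a, g.D π i s a :=
  add_pos_of_pos_of_nonneg one_pos (sum_nonneg fun a _ => g.D_nonneg π i s a)

theorem D_eq_zero_iff (hπ : IsProfile π) (i : Fin n) (s : Fin S) (a : Fin (A i)) :
    g.D π i s a = 0 ↔ g.actionValue π i s a ≤ g.V π i s := by
  rw [D, max_eq_left_iff, sub_nonpos, ← not_lt, g.V_lt_Vdev_iff hπ, not_lt]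

theorem isProfile_f (hπ : IsProfile π) : IsProfile (g.f π) := by
  refine ⟨fun i s a => ?_, fun i s => ?_⟩
  · exact div_nonneg (add_nonneg (hπ.1 i s a) (g.D_nonneg π i s a)) (g.one_add_sum_D_pos π i s).le
  · simp only [f]
    rw [← sum_div, sum_add_distrib, hπ.2, div_self (g.one_add_sum_D_pos π i s).ne']

theorem D_eq_mul_sum_of_f_eq (hf : g.f π = π) (i : Fin n) (s : Fin S) (a : Fin (A i)) :
    g.D π i s a = π i s a * ∑ b, g.D π i s b := by
  have heq : (π i s a + g.D π i s a) / (1 + ∑ b, g.D π i s b) = π i s a :=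
    congrFun (congrFun (congrFun hf i) s) a
  rw [div_eq_iff (g.one_add_sum_D_pos π i s).ne', mul_one_add] at heq
  exact add_left_cancel heq

theorem isMPE_of_f_eq (hπ : IsProfile π) (hf : g.f π = π) : g.IsMPE π := by
  refine g.isMPE_of_actionValue_le hπ fun i s a => (g.D_eq_zero_iff hπ i s a).1 ?_
  obtain ⟨b, hb_pos, hb⟩ := exists_pos_and_le_sum_mul (isProfile_iff_mem_stdSimplex.1 hπ i s)
    (g.actionValue π i s)
  have hDb : g.D π i s b = 0 :=
    (g.D_eq_zero_iff hπ i s b).2 (hb.trans_eq (g.V_eq_sum_actionValue hπ i s).symm)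
  have hsum : ∑ c, g.D π i s c = 0 := by
    rw [g.D_eq_mul_sum_of_f_eq hf i s b] at hDb
    exact (mul_eq_zero.1 hDb).resolve_left hb_pos.ne'
  rw [g.D_eq_mul_sum_of_f_eq hf, hsum, mul_zero]

section Continuity

variable {Y : Type*} [TopologicalSpace Y] {φ : Y → Profile n S A}

theorem continuous_jointProb (hφ : Continuous φ) (s : Fin S) (a : ∀ i, Fin (A i)) :
    Continuous fun y => jointProb (φ y) s a := by
  unfold jointProb
  fun_prop

theorem continuous_V (hφ : Continuous φ) (hprofile : ∀ y, IsProfile (φ y)) (i : Fin n) :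
    Continuous fun y => g.V (φ y) i := by
  refine continuous_inv_one_sub_smul_mulVec (fun y => g.Pmat_mem_rowStochastic (hprofile y))
    g.γ_nonneg g.γ_lt_one (continuous_matrix fun s s' => ?_) (continuous_pi fun s => ?_)
  · exact continuous_finsetSum _ fun a _ => (continuous_jointProb hφ s a).mul_const _
  · exact continuous_finsetSum _ fun a _ => (continuous_jointProb hφ s a).mul_const _

theorem continuous_devProfile (i : Fin n) (s : Fin S) (a : Fin (A i)) :
    Continuous fun π : Profile n S A => devProfile π i s a := by
  refine continuous_id.update i (continuous_pi fun t => continuous_pi fun b => ?_)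
  split_ifs <;> fun_prop

theorem continuous_D (hφ : Continuous φ) (hprofile : ∀ y, IsProfile (φ y)) (i : Fin n) (s : Fin S)
    (a : Fin (A i)) : Continuous fun y => g.D (φ y) i s a := by
  have hV := g.continuous_V hφ hprofile i
  have hVdev := g.continuous_V ((continuous_devProfile i s a).comp hφ)
    (fun y => (hprofile y).devProfile i s a) i
  exact continuous_const.max
    (((continuous_apply s).comp hVdev).sub ((continuous_apply s).comp hV))

theorem continuous_f (hφ : Continuous φ) (hprofile : ∀ y, IsProfile (φ y)) :
    Continuous fun y => g.f (φ y) := by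
  have hD := g.continuous_D hφ hprofile
  refine continuous_pi fun i => continuous_pi fun s => continuous_pi fun a => ?_
  exact .div (.add (by fun_prop) (hD i s a)) (continuous_const.add
    (continuous_finsetSum _ fun b _ => hD i s b)) fun y => (g.one_add_sum_D_pos (φ y) i s).ne'

end Continuity

theorem exists_isProfile_f_eq (hA : ∀ i, 0 < A i) :
    ∃ π : Profile n S A, IsProfile π ∧ g.f π = π := by
  obtain ⟨π, hπ⟩ := fixedPointProperty_isProfile hA
    ⟨fun π => ⟨g.f π.1, g.isProfile_f π.2⟩,
      (g.continuous_f continuous_subtype_val Subtype.property).subtype_mk _⟩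
  exact ⟨π.1, π.2, congrArg Subtype.val hπ⟩

end ImprovementMap

end SG

open SG in
/-- `f` has at least one fixed point; consequently every finite
discounted stochastic game possesses a Markov perfect equilibrium. -/
theorem exists_fixedPt_and_exists_mpe {n S : ℕ} {A : Fin n → ℕ} (g : SG n S A)
    (hA : ∀ i, 0 < A i) :
    (∃ π : Profile n S A, IsProfile π ∧ g.f π = π) ∧
    (∃ π : Profile n S A, IsProfile π ∧ g.IsMPE π) := by
  obtain ⟨π, hπ, hf⟩ := g.exists_isProfile_f_eq hA
  exact ⟨⟨π, hπ, hf⟩, π, hπ, g.isMPE_of_f_eq hπ hf⟩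
end

section
/- Let π₁, π₂ be strategy profiles of a finite discounted stochastic game with ‖π₁ − π₂‖∞ ≤ δ. Then for all states s, s' ∈ 𝕊, the entries of the inverse matrices satisfy |(I − γP^{π₁})^{-1}(s'|s) − (I − γP^{π₂})^{-1}(s'|s)| ≤ nSA_max δ/(1−γ)². -/
/-!
In the `ℓ∞` operator norm (the largest absolute row sum) each stochastic matrix `P^{πⱼ}` has norm
at most `1`, so the Neumann series gives `‖(I - γP^{πⱼ})⁻¹‖ ≤ (1 - γ)⁻¹`. The resolvent identity

  `(I - x)⁻¹ - (I - y)⁻¹ = (I - x)⁻¹ (x - y) (I - y)⁻¹`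

then bounds the difference of the inverses by `γ ‖P^{π₁} - P^{π₂}‖ / (1 - γ)²`. Applying a
stochastic kernel does not increase `ℓ¹` norms, so `‖P^{π₁} - P^{π₂}‖` is at most the largest `ℓ¹`
distance between the joint action distributions at a state. These are product distributions, and
replacing the factors one agent at a time bounds their distance by the sum of the `ℓ¹` distances of
the factors, each of which is at most `A_max δ`.
-/

open Finset

section ProductDistributions

variable {ι : Type*} [Fintype ι] [DecidableEq ι] {κ : ι → Type*}

lemma prod_update_apply {M : Type*} [CommMonoid M] (p : ∀ i, κ i → M) (i : ι) (u : κ i → M)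
    (a : ∀ i, κ i) :
    ∏ j, Function.update p i u j (a j) = u (a i) * ∏ j ∈ {i}ᶜ, p j (a j) := by
  rw [Fintype.prod_eq_mul_prod_compl i, Function.update_self]
  congr 1
  refine prod_congr rfl fun j hj => ?_
  rw [Function.update_of_ne (by simpa using hj)]

variable [∀ i, Fintype (κ i)]

lemma prod_apply_mem_stdSimplex {R : Type*} [CommSemiring R] [PartialOrder R] [IsOrderedRing R]
    {p : ∀ i, κ i → R} (hp : ∀ i, p i ∈ stdSimplex R (κ i)) :
    (fun a : ∀ i, κ i => ∏ i, p i (a i)) ∈ stdSimplex R (∀ i, κ i) := by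
  refine ⟨fun a => prod_nonneg fun i _ => (hp i).1 (a i), ?_⟩
  rw [← Fintype.prod_sum]
  exact prod_eq_one fun i _ => (hp i).2

variable {R : Type*} [CommRing R] [LinearOrder R] [IsOrderedRing R]

lemma sum_abs_prod_update_sub_prod {p : ∀ i, κ i → R} (hp : ∀ i, p i ∈ stdSimplex R (κ i))
    (i : ι) (u : κ i → R) :
    ∑ a : ∀ j, κ j, |∏ j, Function.update p i u j (a j) - ∏ j, p j (a j)| =
      ∑ b, |u b - p i b| := by
  have habs (a : ∀ j, κ j) : |∏ j, Function.update p i u j (a j) - ∏ j, p j (a j)| =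
      ∏ j, Function.update p i (fun b => |u b - p i b|) j (a j) := by
    have hrest : 0 ≤ ∏ j ∈ {i}ᶜ, p j (a j) := prod_nonneg fun j _ => (hp j).1 (a j)
    rw [prod_update_apply, prod_update_apply, Fintype.prod_eq_mul_prod_compl i (fun j => p j (a j)),
      ← sub_mul, abs_mul, abs_of_nonneg hrest]
  simp_rw [habs]
  rw [← Fintype.prod_sum, Fintype.prod_eq_mul_prod_compl i, Function.update_self,
    prod_eq_one, mul_one]
  intro j hj
  rw [Function.update_of_ne (by simpa using hj), (hp j).2]

lemma sum_abs_prod_sub_prod_le {p q : ∀ i, κ i → R} (hp : ∀ i, p i ∈ stdSimplex R (κ i))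
    (hq : ∀ i, q i ∈ stdSimplex R (κ i)) :
    ∑ a : ∀ i, κ i, |∏ i, p i (a i) - ∏ i, q i (a i)| ≤ ∑ i, ∑ b, |p i b - q i b| := by
  suffices hybrid : ∀ s : Finset ι,
      ∑ a : ∀ i, κ i, |∏ i, s.piecewise p q i (a i) - ∏ i, q i (a i)| ≤
        ∑ i ∈ s, ∑ b, |p i b - q i b| by
    simpa only [piecewise_univ] using hybrid univ
  intro s
  induction s using Finset.induction_on with
  | empty => simp
  | insert i s hi ih =>
    have hmix (j : ι) : s.piecewise p q j ∈ stdSimplex R (κ j) := by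
      by_cases hj : j ∈ s <;> simp [hj, hp, hq]
    have hexchange := sum_abs_prod_update_sub_prod hmix i (p i)
    rw [piecewise_eq_of_notMem s p q hi] at hexchange
    rw [piecewise_insert, sum_insert hi, ← hexchange]
    refine le_trans ?_ (add_le_add_right ih _)
    rw [← sum_add_distrib]
    exact sum_le_sum fun a _ => abs_sub_le _ _ _

end ProductDistributions

section Resolvent

variable {R : Type*} [NormedRing R] [NormOneClass R] [HasSummableGeomSeries R] {x y : R} {c : ℝ}

lemma norm_inverse_one_sub_le (hx : ‖x‖ < 1) : ‖Ring.inverse (1 - x)‖ ≤ (1 - ‖x‖)⁻¹ := by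
  rw [NormedRing.inverse_one_sub x hx]
  calc ‖∑' k : ℕ, x ^ k‖ ≤ ‖(1 : R)‖ - 1 + (1 - ‖x‖)⁻¹ := tsum_geometric_le_of_norm_lt_one x hx
    _ = (1 - ‖x‖)⁻¹ := by rw [norm_one, sub_self, zero_add]

lemma norm_inverse_one_sub_sub_inverse_one_sub_le (hx : ‖x‖ ≤ c) (hy : ‖y‖ ≤ c) (hc : c < 1) :
    ‖Ring.inverse (1 - x) - Ring.inverse (1 - y)‖ ≤ ‖x - y‖ / (1 - c) ^ 2 := by
  have hux : IsUnit (1 - x) := isUnit_one_sub_of_norm_lt_one (hx.trans_lt hc)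
  have huy : IsUnit (1 - y) := isUnit_one_sub_of_norm_lt_one (hy.trans_lt hc)
  have hinv {z : R} (hz : ‖z‖ ≤ c) : ‖Ring.inverse (1 - z)‖ ≤ (1 - c)⁻¹ :=
    (norm_inverse_one_sub_le (hz.trans_lt hc)).trans
      (inv_anti₀ (sub_pos.2 hc) (sub_le_sub_left hz 1))
  calc ‖Ring.inverse (1 - x) - Ring.inverse (1 - y)‖
      = ‖Ring.inverse (1 - x) * (x - y) * Ring.inverse (1 - y)‖ := by
        rw [Ring.inverse_sub_inverse (iff_of_true hux huy), sub_sub_sub_cancel_left]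
    _ ≤ ‖Ring.inverse (1 - x)‖ * ‖x - y‖ * ‖Ring.inverse (1 - y)‖ := norm_mul₃_le
    _ ≤ (1 - c)⁻¹ * ‖x - y‖ * (1 - c)⁻¹ := by
        have hc0 : 0 ≤ (1 - c)⁻¹ := (norm_nonneg _).trans (hinv hx)
        exact mul_le_mul (mul_le_mul_of_nonneg_right (hinv hx) (norm_nonneg _)) (hinv hy)
          (norm_nonneg _) (mul_nonneg hc0 (norm_nonneg _))
    _ = ‖x - y‖ / (1 - c) ^ 2 := by
        rw [div_eq_mul_inv, ← inv_pow]
        ring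

end Resolvent

open scoped Matrix Matrix.Norms.Operator

section RowSums

variable {l m : Type*} [Fintype l] [Fintype m]

lemma linfty_opNorm_le_iff {α : Type*} [SeminormedAddCommGroup α] {M : Matrix l m α} {c : ℝ}
    (hc : 0 ≤ c) : ‖M‖ ≤ c ↔ ∀ i, ∑ j, ‖M i j‖ ≤ c := by
  lift c to NNReal using hc
  simp only [← coe_nnnorm, ← NNReal.coe_sum, NNReal.coe_le_coe, Matrix.linfty_opNNNorm_def,
    Finset.sup_le_iff, mem_univ, forall_const]

lemma norm_entry_le_linfty_opNorm {α : Type*} [SeminormedAddCommGroup α] (M : Matrix l m α)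
    (i : l) (j : m) : ‖M i j‖ ≤ ‖M‖ :=
  (single_le_sum (f := fun k => ‖M i k‖) (fun _ _ => norm_nonneg _) (mem_univ j)).trans
    ((linfty_opNorm_le_iff (norm_nonneg M)).1 le_rfl i)

lemma sum_norm_vecMul_le {α : Type*} [NonUnitalSeminormedRing α] (v : l → α) (M : Matrix l m α) :
    ∑ j, ‖(v ᵥ* M) j‖ ≤ (∑ i, ‖v i‖) * ‖M‖ := by
  simpa only [← Matrix.replicateRow_vecMul, Matrix.linfty_opNorm_replicateRow] using
    Matrix.linfty_opNorm_mul (Matrix.replicateRow Unit v) M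

lemma sum_norm_of_mem_stdSimplex {v : l → ℝ} (hv : v ∈ stdSimplex ℝ l) : ∑ i, ‖v i‖ = 1 := by
  simp_rw [Real.norm_of_nonneg (hv.1 _), hv.2]

lemma sum_norm_vecMul_le_of_mem_stdSimplex (v : l → ℝ) {K : Matrix l m ℝ}
    (hK : ∀ i, K i ∈ stdSimplex ℝ m) : ∑ j, ‖(v ᵥ* K) j‖ ≤ ∑ i, ‖v i‖ := by
  have hnorm : ‖K‖ ≤ 1 :=
    (linfty_opNorm_le_iff zero_le_one).2 fun i => (sum_norm_of_mem_stdSimplex (hK i)).le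
  exact (sum_norm_vecMul_le v K).trans
    (mul_le_of_le_one_right (sum_nonneg fun i _ => norm_nonneg _) hnorm)

end RowSums

namespace SG

variable {n S : ℕ} {A : Fin n → ℕ} {π π₁ π₂ : Profile n S A} {δ : ℝ}

lemma IsProfile.mem_stdSimplex (h : IsProfile π) (i : Fin n) (s : Fin S) :
    π i s ∈ stdSimplex ℝ (Fin (A i)) :=
  ⟨h.1 i s, h.2 i s⟩

lemma IsProfile.jointProb_mem_stdSimplex (h : IsProfile π) (s : Fin S) :
    jointProb π s ∈ stdSimplex ℝ (∀ i, Fin (A i)) :=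
  prod_apply_mem_stdSimplex fun i => h.mem_stdSimplex i s

lemma IsProfile.sum_abs_sub_le (h₁ : IsProfile π₁) (hδ : ∀ i s a, |π₁ i s a - π₂ i s a| ≤ δ)
    (i : Fin n) (s : Fin S) : ∑ b, |π₁ i s b - π₂ i s b| ≤ Amax A * δ := by
  obtain ⟨b⟩ : Nonempty (Fin (A i)) := by
    by_contra! hempty
    simpa only [stdSimplex_of_isEmpty_index, Set.mem_empty_iff_false] using h₁.mem_stdSimplex i s
  have hδ0 : 0 ≤ δ := (abs_nonneg _).trans (hδ i s b)
  calc ∑ b, |π₁ i s b - π₂ i s b|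
      ≤ A i * δ := by simpa using sum_le_card_nsmul univ _ δ fun b _ => hδ i s b
    _ ≤ Amax A * δ := by
        gcongr
        exact le_sup (f := A) (mem_univ i)

lemma sum_abs_jointProb_sub_le (h₁ : IsProfile π₁) (h₂ : IsProfile π₂)
    (hδ : ∀ i s a, |π₁ i s a - π₂ i s a| ≤ δ) (s : Fin S) :
    ∑ a, |jointProb π₁ s a - jointProb π₂ s a| ≤ n * Amax A * δ :=
  calc ∑ a, |jointProb π₁ s a - jointProb π₂ s a|
      ≤ ∑ i, ∑ b, |π₁ i s b - π₂ i s b| :=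
        sum_abs_prod_sub_prod_le (h₁.mem_stdSimplex · s) (h₂.mem_stdSimplex · s)
    _ ≤ n * (Amax A * δ) := by
        simpa using sum_le_card_nsmul univ _ _ fun i _ => h₁.sum_abs_sub_le hδ i s
    _ = n * Amax A * δ := (mul_assoc _ _ _).symm

variable (g : SG n S A)

lemma Pmat_apply (π : Profile n S A) (s s' : Fin S) :
    g.Pmat π s s' = (jointProb π s ᵥ* Matrix.of (g.P s)) s' :=
  rfl

lemma P_mem_stdSimplex (s : Fin S) (a : ∀ i, Fin (A i)) : g.P s a ∈ stdSimplex ℝ (Fin S) :=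
  ⟨g.P_nonneg s a, g.P_sum_one s a⟩

lemma norm_Pmat_le_one (h : IsProfile π) : ‖g.Pmat π‖ ≤ 1 := by
  refine (linfty_opNorm_le_iff zero_le_one).2 fun s => ?_
  simp_rw [Pmat_apply]
  exact (sum_norm_vecMul_le_of_mem_stdSimplex _ (g.P_mem_stdSimplex s)).trans_eq
    (sum_norm_of_mem_stdSimplex (h.jointProb_mem_stdSimplex s))

lemma sum_norm_Pmat_sub_le (π₁ π₂ : Profile n S A) (s : Fin S) :
    ∑ s', ‖(g.Pmat π₁ - g.Pmat π₂) s s'‖ ≤ ∑ a, |jointProb π₁ s a - jointProb π₂ s a| := by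
  have hrow (s' : Fin S) : (g.Pmat π₁ - g.Pmat π₂) s s' =
      ((jointProb π₁ s - jointProb π₂ s) ᵥ* Matrix.of (g.P s)) s' := by
    rw [Matrix.sub_apply, Matrix.sub_vecMul, Pi.sub_apply, Pmat_apply, Pmat_apply]
  simp_rw [hrow]
  exact sum_norm_vecMul_le_of_mem_stdSimplex _ (g.P_mem_stdSimplex s)

lemma norm_Pmat_sub_le [Nonempty (Fin S)] (h₁ : IsProfile π₁) (h₂ : IsProfile π₂)
    (hδ : ∀ i s a, |π₁ i s a - π₂ i s a| ≤ δ) :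
    ‖g.Pmat π₁ - g.Pmat π₂‖ ≤ n * Amax A * δ := by
  have hrow (s : Fin S) := (g.sum_norm_Pmat_sub_le π₁ π₂ s).trans
    (sum_abs_jointProb_sub_le h₁ h₂ hδ s)
  obtain ⟨s⟩ := ‹Nonempty (Fin S)›
  exact (linfty_opNorm_le_iff ((sum_nonneg fun _ _ => norm_nonneg _).trans (hrow s))).2 hrow

lemma norm_inv_one_sub_smul_Pmat_sub_le [Nonempty (Fin S)] (h₁ : IsProfile π₁) (h₂ : IsProfile π₂) :
    ‖(1 - g.γ • g.Pmat π₁)⁻¹ - (1 - g.γ • g.Pmat π₂)⁻¹‖ ≤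
      g.γ * ‖g.Pmat π₁ - g.Pmat π₂‖ / (1 - g.γ) ^ 2 := by
  have hsmul (M : Matrix (Fin S) (Fin S) ℝ) : ‖g.γ • M‖ = g.γ * ‖M‖ := by
    rw [norm_smul, Real.norm_of_nonneg g.γ_nonneg]
  have hdisc {π : Profile n S A} (h : IsProfile π) : ‖g.γ • g.Pmat π‖ ≤ g.γ :=
    (hsmul _).trans_le (mul_le_of_le_one_right g.γ_nonneg (g.norm_Pmat_le_one h))
  simpa only [Matrix.nonsing_inv_eq_ringInverse, ← smul_sub, hsmul] using
    norm_inverse_one_sub_sub_inverse_one_sub_le (hdisc h₁) (hdisc h₂) g.γ_lt_one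

end SG

open SG in
/-- entrywise bound on the difference of the matrices `(I − γP^π)⁻¹`. -/
theorem inv_matrix_entry_diff_le {n S : ℕ} {A : Fin n → ℕ} (g : SG n S A)
    (π₁ π₂ : Profile n S A) (h₁ : IsProfile π₁) (h₂ : IsProfile π₂)
    (δ : ℝ) (hδ : ∀ i s a, |π₁ i s a - π₂ i s a| ≤ δ) :
    ∀ s s' : Fin S,
      |(1 - g.γ • g.Pmat π₁)⁻¹ s s' - (1 - g.γ • g.Pmat π₂)⁻¹ s s'| ≤
        (n : ℝ) * (S : ℝ) * (Amax A : ℝ) * δ / (1 - g.γ) ^ 2 := by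
  intro s s'
  have : Nonempty (Fin S) := ⟨s⟩
  have hP : ‖g.Pmat π₁ - g.Pmat π₂‖ ≤ n * Amax A * δ := g.norm_Pmat_sub_le h₁ h₂ hδ
  have hγS : g.γ ≤ S := g.γ_lt_one.le.trans (by exact_mod_cast Fin.pos s)
  calc |(1 - g.γ • g.Pmat π₁)⁻¹ s s' - (1 - g.γ • g.Pmat π₂)⁻¹ s s'|
      ≤ ‖(1 - g.γ • g.Pmat π₁)⁻¹ - (1 - g.γ • g.Pmat π₂)⁻¹‖ :=
        norm_entry_le_linfty_opNorm ((1 - g.γ • g.Pmat π₁)⁻¹ - (1 - g.γ • g.Pmat π₂)⁻¹) s s'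
    _ ≤ g.γ * ‖g.Pmat π₁ - g.Pmat π₂‖ / (1 - g.γ) ^ 2 :=
        g.norm_inv_one_sub_smul_Pmat_sub_le h₁ h₂
    _ ≤ S * (n * Amax A * δ) / (1 - g.γ) ^ 2 := by gcongr
    _ = n * S * Amax A * δ / (1 - g.γ) ^ 2 := by ring
end
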